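/- Let q be an odd prime power and A ⊆ 𝔽_q with |A|²·|A−A| > 2q². Then there exists a ∈ A such that |{(a−b)² + s² : b ∈ A, s ∈ A−A}| ≥ q/2. -/

import Mathlib

open Finset
open scoped Pointwise

/-!
Write `D = A - A`, `M = |A| |D|`, and for `a ∈ F` let `E a` be the number of pairs of points
`(b, s), (b', s')` of `A × D` with `(a - b)² + s² = (a - b')² + s'²`. This equation is affine in
`a`, with leading coefficient `2 (b' - b)`; so if `b ≠ b'` it holds for at most one `a`, while if
`b = b'` it forces `s' = ± s`. Hence `∑ a, E a ≤ M² + 2 q M` over all `a ∈ F`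
(`sum_energy_le`).

By Cauchy–Schwarz, `M² ≤ |image| * E a` (`card_sq_le_card_image_mul_energy`), which gives
`q * E a ≥ M²` for every `a`, and `q * E a ≥ 2 M²` whenever the pinned distance set at `a` has
at most `q / 2` elements. Were this so for every `a ∈ A`, then summing over `F` would give
`q M² + |A| M² ≤ q M² + 2 q² M`, i.e. `|A|² |D| ≤ 2 q²`, contrary to hypothesis.
-/

/-- The number of pairs of points of `S` on which `g` agrees. -/
def energy {α β : Type*} [DecidableEq β] (S : Finset α) (g : α → β) : ℕ :=
  ∑ p ∈ S, #{p' ∈ S | g p' = g p}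

theorem card_sq_le_card_image_mul_energy {α β : Type*} [DecidableEq β] (S : Finset α)
    (g : α → β) : #S ^ 2 ≤ #(S.image g) * energy S g := by
  have h1 : energy S g = ∑ t ∈ S.image g, #{p ∈ S | g p = t} ^ 2 := by
    rw [energy, sum_comp (fun t => #{p' ∈ S | g p' = t}) g]
    simp [sq]
  rw [h1, card_eq_sum_card_image g S]
  exact sq_sum_le_card_mul_sum_sq

theorem sum_energy_le {F : Type*} [Field F] [Fintype F] [DecidableEq F] (h2 : (2 : F) ≠ 0)
    (S : Finset (F × F)) :
    ∑ a : F, energy S (fun p : F × F => (a - p.1) ^ 2 + p.2 ^ 2)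
      ≤ #S ^ 2 + 2 * Fintype.card F * #S := by
  have key : ∀ p p' : F × F,
      #{a : F | (a - p'.1) ^ 2 + p'.2 ^ 2 = (a - p.1) ^ 2 + p.2 ^ 2}
        ≤ 1 + if p' ∈ ({p, (p.1, -p.2)} : Finset (F × F)) then Fintype.card F else 0 := by
    rintro ⟨b, s⟩ ⟨b', s'⟩
    by_cases hb : b' = b
    · subst hb
      split_ifs with hm
      · exact (card_le_univ _).trans (Nat.le_add_left _ _)
      · have : ∀ a : F, ¬ ((a - b') ^ 2 + s' ^ 2 = (a - b') ^ 2 + s ^ 2) := by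
          intro a ha
          rcases sq_eq_sq_iff_eq_or_eq_neg.1 (add_left_cancel ha) with h | h <;>
            simp [h] at hm
        simp [this]
    · refine le_trans (card_le_one.2 ?_) (Nat.le_add_right _ _)
      intro x hx y hy
      simp only [mem_filter, mem_univ, true_and] at hx hy
      have h0 : (2 * (b - b')) * (x - y) = 0 := by linear_combination hx - hy
      rcases mul_eq_zero.1 h0 with h | h
      · rcases mul_eq_zero.1 h with h | h
        · exact absurd h h2
        · exact absurd (sub_eq_zero.1 h).symm hb
      · exact sub_eq_zero.1 h
  calc ∑ a : F, energy S (fun p : F × F => (a - p.1) ^ 2 + p.2 ^ 2)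
      = ∑ p ∈ S, ∑ p' ∈ S,
          #{a : F | (a - p'.1) ^ 2 + p'.2 ^ 2 = (a - p.1) ^ 2 + p.2 ^ 2} := by
        simp only [energy, card_filter]
        rw [sum_comm]
        exact sum_congr rfl fun p _ => sum_comm
    _ ≤ ∑ p ∈ S, ∑ p' ∈ S,
          (1 + if p' ∈ ({p, (p.1, -p.2)} : Finset (F × F)) then Fintype.card F else 0) :=
        sum_le_sum fun p _ => sum_le_sum fun p' _ => key p p'
    _ ≤ ∑ p ∈ S, (#S + 2 * Fintype.card F) := by
        refine sum_le_sum fun p _ => ?_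
        rw [sum_add_distrib, ← sum_filter, sum_const, sum_const, smul_eq_mul, smul_eq_mul, mul_one]
        gcongr
        refine (card_le_card (t := {p, (p.1, -p.2)}) fun x hx => (mem_filter.1 hx).2).trans ?_
        exact card_le_two
    _ = #S ^ 2 + 2 * Fintype.card F * #S := by
        rw [sum_const, smul_eq_mul]; ring

theorem pinned_distances_cartesian
    {F : Type*} [Field F] [Fintype F] [DecidableEq F] (q : ℕ) (hq : Fintype.card F = q)
    (hodd : Odd q) (A : Finset F)
    (h : A.card ^ 2 * (A - A).card > 2 * q ^ 2) :
    ∃ a ∈ A,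
      (((A ×ˢ (A - A)).image (fun p : F × F => (a - p.1) ^ 2 + p.2 ^ 2)).card : ℝ)
        ≥ (q : ℝ) / 2 := by
  have h2 : (2 : F) ≠ 0 := by
    refine Ring.two_ne_zero fun hc => ?_
    have := FiniteField.even_card_of_char_two hc
    rw [hq] at this
    have := Nat.odd_iff.1 hodd
    omega
  by_contra! hcon
  set S := A ×ˢ (A - A) with hS
  have hcard : #S = #A * #(A - A) := card_product _ _
  set E : F → ℕ := fun a => energy S (fun p : F × F => (a - p.1) ^ 2 + p.2 ^ 2) with hE
  have hlow : ∀ a : F, #S ^ 2 + (if a ∈ A then #S ^ 2 else 0) ≤ q * E a := by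
    intro a
    have hcs := card_sq_le_card_image_mul_energy S (fun p : F × F => (a - p.1) ^ 2 + p.2 ^ 2)
    split_ifs with ha
    · have hlt := hcon a ha
      have hlt' : 2 * #(S.image (fun p : F × F => (a - p.1) ^ 2 + p.2 ^ 2)) ≤ q := by
        have : (2 * #(S.image (fun p : F × F => (a - p.1) ^ 2 + p.2 ^ 2)) : ℝ) ≤ q := by
          linarith
        exact_mod_cast this
      calc _ = 2 * #S ^ 2 := by ring
        _ ≤ 2 * (#(S.image (fun p : F × F => (a - p.1) ^ 2 + p.2 ^ 2)) * E a) := by gcongr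
        _ = (2 * #(S.image (fun p : F × F => (a - p.1) ^ 2 + p.2 ^ 2))) * E a := by ring
        _ ≤ q * E a := by gcongr
    · rw [add_zero]
      refine hcs.trans (Nat.mul_le_mul_right _ ?_)
      rw [← hq]
      exact card_le_univ _
  have hsum : q * #S ^ 2 + #A * #S ^ 2 ≤ q * (#S ^ 2 + 2 * q * #S) := by
    calc q * #S ^ 2 + #A * #S ^ 2
        = ∑ a : F, (#S ^ 2 + (if a ∈ A then #S ^ 2 else 0)) := by
          rw [sum_add_distrib, ← sum_filter]
          simp [hq]
      _ ≤ ∑ a : F, q * E a := sum_le_sum fun a _ => hlow a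
      _ = q * ∑ a : F, E a := (mul_sum _ _ _).symm
      _ ≤ q * (#S ^ 2 + 2 * q * #S) := by
          have := sum_energy_le h2 S
          rw [hq] at this
          gcongr
  have hpos : 0 < #S := by
    rw [hcard]
    refine Nat.pos_of_ne_zero fun h0 => ?_
    have : #A ^ 2 * #(A - A) = #A * (#A * #(A - A)) := by ring
    rw [this, h0] at h
    omega
  have hle : (#A * #S) * #S ≤ (2 * q ^ 2) * #S := by nlinarith
  have hle' := Nat.le_of_mul_le_mul_right hle hpos
  rw [hcard] at hle'
  have : #A ^ 2 * #(A - A) = #A * (#A * #(A - A)) := by ring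
  omega
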